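/- arXiv:1909.04259 — 2 statements merged into one kernel-verified Lean document; each statement's English description precedes it below -/
import Mathlib

section
/- Let K ≥ 1 be an integer, 0 < r < 1, and let k be an integer. Then Δ(k) = (1/K²)·[ K·(1 − r²) / ((1 − conj(ρ_k))·(1 − ρ_k)) − conj(ρ_k)·(1 − r^K) / (1 − conj(ρ_k))² − ρ_k·(1 − r^K) / (1 − ρ_k)² ]. -/
open Complex Finset

/-!
On the diagonal the phase factor depends only on `n - m`, so the summand is `ρ_k ^ (n - m)` for
`m ≤ n` and `conj ρ_k ^ (m - n)` for `n ≤ m`: the double sum adds up the entries of a Toeplitz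
matrix that is geometric on either side of its diagonal. Each triangle is a sum of geometric sums,
and the powers `ρ_k ^ K` left over collapse to `r ^ K` because `ρ_k / r` is a `K`-th root of unity.
-/

section Toeplitz

/-- Truncated subtraction makes at least one factor of each summand equal to `1`. -/
theorem sum_range_sum_range_pow_sub_mul_pow_sub {R : Type*} [Semiring R] (a b : R) (N : ℕ) :
    ∑ m ∈ range N, ∑ n ∈ range N, a ^ (n - m) * b ^ (m - n) =
      N + ∑ n ∈ range N, ∑ m ∈ range n, a ^ (n - m) +
        ∑ m ∈ range N, ∑ n ∈ range m, b ^ (m - n) := by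
  induction N with
  | zero => simp
  | succ N ih =>
    have last_column : ∑ m ∈ range N, a ^ (N - m) * b ^ (m - N) = ∑ m ∈ range N, a ^ (N - m) :=
      sum_congr rfl fun m hm => by
        rw [Nat.sub_eq_zero_of_le (mem_range.mp hm).le, pow_zero, mul_one]
    have last_row : ∑ n ∈ range N, a ^ (n - N) * b ^ (N - n) = ∑ n ∈ range N, b ^ (N - n) :=
      sum_congr rfl fun n hn => by
        rw [Nat.sub_eq_zero_of_le (mem_range.mp hn).le, pow_zero, one_mul]
    simp only [sum_range_succ, sum_add_distrib, ih, last_column, last_row, Nat.sub_self,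
      pow_zero, mul_one, Nat.cast_succ]
    abel

variable {F : Type*} [Field F]

theorem sum_range_pow_sub {x : F} (hx : x ≠ 1) (N : ℕ) :
    ∑ n ∈ range N, x ^ (N - n) = x * (1 - x ^ N) / (1 - x) := by
  have reflected : ∑ n ∈ range N, x ^ (N - n) = ∑ n ∈ range N, x * x ^ n := by
    rw [← sum_range_reflect]
    refine sum_congr rfl fun n hn => ?_
    rw [← pow_succ']
    congr 1
    have := mem_range.mp hn
    omega
  rw [reflected, ← mul_sum, mul_div_assoc,
    eq_div_of_mul_eq (sub_ne_zero.mpr hx.symm) (geom_sum_mul_neg x N)]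

theorem sum_range_sum_range_pow_sub {x : F} (hx : x ≠ 1) (N : ℕ) :
    ∑ n ∈ range N, ∑ m ∈ range n, x ^ (n - m) =
      N * x / (1 - x) - x * (1 - x ^ N) / (1 - x) ^ 2 := by
  have hx' : 1 - x ≠ 0 := sub_ne_zero.mpr hx.symm
  calc ∑ n ∈ range N, ∑ m ∈ range n, x ^ (n - m)
      = ∑ n ∈ range N, x * (1 - x ^ n) / (1 - x) := sum_congr rfl fun n _ => sum_range_pow_sub hx n
    _ = x * (N - ∑ n ∈ range N, x ^ n) / (1 - x) := by
        rw [← sum_div, ← mul_sum, sum_sub_distrib, sum_const, card_range, nsmul_one]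
    _ = x * (N - (1 - x ^ N) / (1 - x)) / (1 - x) := by
        rw [eq_div_of_mul_eq hx' (geom_sum_mul_neg x N)]
    _ = N * x / (1 - x) - x * (1 - x ^ N) / (1 - x) ^ 2 := by
        field_simp

theorem sum_range_sum_range_pow_sub_mul_pow_sub_eq_div {a b : F} (ha : a ≠ 1) (hb : b ≠ 1)
    (N : ℕ) :
    ∑ m ∈ range N, ∑ n ∈ range N, a ^ (n - m) * b ^ (m - n) =
      N * (1 - a * b) / ((1 - b) * (1 - a)) - b * (1 - b ^ N) / (1 - b) ^ 2
        - a * (1 - a ^ N) / (1 - a) ^ 2 := by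
  have linear_coeff : 1 + a / (1 - a) + b / (1 - b) = (1 - a * b) / ((1 - b) * (1 - a)) := by
    have ha' : 1 - a ≠ 0 := sub_ne_zero.mpr ha.symm
    have hb' : 1 - b ≠ 0 := sub_ne_zero.mpr hb.symm
    field_simp
    ring
  rw [sum_range_sum_range_pow_sub_mul_pow_sub, sum_range_sum_range_pow_sub ha,
    sum_range_sum_range_pow_sub hb, mul_div_assoc (N : F) (1 - a * b), ← linear_coeff]
  ring

theorem pow_natAbs_sub_mul_zpow_sub {G : Type*} [DivisionCommMonoid G] (r w : G) (m n : ℕ) :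
    r ^ ((m : ℤ) - n).natAbs * w ^ ((n : ℤ) - m) = (r * w) ^ (n - m) * (r * w⁻¹) ^ (m - n) := by
  rcases le_total m n with h | h
  all_goals
    obtain ⟨d, rfl⟩ := Nat.exists_eq_add_of_le h
    simp [mul_pow]

theorem sum_range_sum_range_pow_natAbs_sub_mul_zpow_sub {r w : F} {N : ℕ} (hw : w ≠ 0)
    (hwN : w ^ N = 1) (hrw : r * w ≠ 1) (hrw' : r * w⁻¹ ≠ 1) :
    ∑ m ∈ range N, ∑ n ∈ range N, r ^ ((m : ℤ) - n).natAbs * w ^ ((n : ℤ) - m) =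
      N * (1 - r ^ 2) / ((1 - r * w⁻¹) * (1 - r * w))
        - r * w⁻¹ * (1 - r ^ N) / (1 - r * w⁻¹) ^ 2
        - r * w * (1 - r ^ N) / (1 - r * w) ^ 2 := by
  have hprod : r * w * (r * w⁻¹) = r ^ 2 := by field_simp
  have hpow : (r * w) ^ N = r ^ N := by rw [mul_pow, hwN, mul_one]
  have hpow' : (r * w⁻¹) ^ N = r ^ N := by rw [mul_pow, inv_pow, hwN, inv_one, mul_one]
  simp only [pow_natAbs_sub_mul_zpow_sub]
  rw [sum_range_sum_range_pow_sub_mul_pow_sub_eq_div hrw hrw', hprod, hpow, hpow']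

end Toeplitz

section RootOfUnity

theorem exp_two_pi_mul_I_mul_int_div_pow {N : ℕ} (hN : N ≠ 0) (k : ℤ) :
    exp (2 * (Real.pi : ℂ) * I * (k : ℂ) / (N : ℂ)) ^ N = 1 := by
  rw [← exp_nat_mul, mul_div_cancel₀ _ (Nat.cast_ne_zero.mpr hN), mul_comm]
  exact exp_int_mul_two_pi_mul_I k

theorem norm_exp_two_pi_mul_I_mul_int_div (k : ℤ) (N : ℕ) :
    ‖exp (2 * (Real.pi : ℂ) * I * (k : ℂ) / (N : ℂ))‖ = 1 := by
  rw [← norm_exp_ofReal_mul_I (2 * Real.pi * k / N)]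
  push_cast
  ring_nf

theorem ofReal_mul_exp_two_pi_mul_I_mul_int_div_ne_one {r : ℝ} (hr : |r| ≠ 1) (k : ℤ) (N : ℕ) :
    (r : ℂ) * exp (2 * (Real.pi : ℂ) * I * (k : ℂ) / (N : ℂ)) ≠ 1 := fun h =>
  hr <| by simpa only [norm_mul, norm_exp_two_pi_mul_I_mul_int_div, mul_one, norm_real,
    Real.norm_eq_abs, norm_one] using congrArg norm h

theorem exp_neg_two_pi_mul_I_mul_sub_div (k m n : ℤ) (z : ℂ) :
    exp (-2 * (Real.pi : ℂ) * I * ((k * m - k * n : ℤ) : ℂ) / z) =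
      exp (2 * (Real.pi : ℂ) * I * (k : ℂ) / z) ^ (n - m) := by
  rw [← exp_int_mul]
  push_cast
  ring_nf

end RootOfUnity

theorem stmt_11_general (K : ℕ) (hK : 1 ≤ K) (r : ℝ)
    (ρ : ℤ → ℂ)
    (hρ : ∀ k : ℤ, ρ k = (r : ℂ) * Complex.exp (2 * (Real.pi : ℂ) * Complex.I * (k : ℂ) / (K : ℂ)))
    (Δ : ℤ → ℤ → ℂ)
    (hΔ : ∀ k1 k2 : ℤ, Δ k1 k2 =
      (1 / (K : ℂ) ^ 2) * ∑ m ∈ Finset.range K, ∑ n ∈ Finset.range K,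
        (r : ℂ) ^ (((m : ℤ) - (n : ℤ)).natAbs) *
          Complex.exp (-2 * (Real.pi : ℂ) * Complex.I *
            (((k1 * m - k2 * n : ℤ)) : ℂ) / (K : ℂ)))
    (k : ℤ) (hρk : ρ k ≠ 1) :
    Δ k k = (1 / (K : ℂ) ^ 2) *
      ((K : ℂ) * (1 - (r : ℂ) ^ 2) / ((1 - (starRingEnd ℂ) (ρ k)) * (1 - ρ k))
        - (starRingEnd ℂ) (ρ k) * (1 - (r : ℂ) ^ K) / (1 - (starRingEnd ℂ) (ρ k)) ^ 2
        - ρ k * (1 - (r : ℂ) ^ K) / (1 - ρ k) ^ 2) := by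
  set w := exp (2 * (Real.pi : ℂ) * I * (k : ℂ) / (K : ℂ))
  have hwK : w ^ K = 1 := exp_two_pi_mul_I_mul_int_div_pow (Nat.one_le_iff_ne_zero.mp hK) k
  have hconj : starRingEnd ℂ (ρ k) = r * w⁻¹ := by
    rw [hρ, map_mul, conj_ofReal, inv_eq_conj (norm_exp_two_pi_mul_I_mul_int_div k K)]
  have hconj_ne : (r : ℂ) * w⁻¹ ≠ 1 := by
    rw [← hconj]
    exact (map_ne_one_iff _ (starRingEnd ℂ).injective).mpr hρk
  rw [hΔ, hconj, hρ k, ← sum_range_sum_range_pow_natAbs_sub_mul_zpow_sub (exp_ne_zero _) hwK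
    (hρ k ▸ hρk) hconj_ne]
  simp only [exp_neg_two_pi_mul_I_mul_sub_div]

/-- Closed form of the diagonal correlation `Δ(k)` of the nDFT coefficients of the
Wiener phase-noise process. -/
theorem stmt_11 (K : ℕ) (hK : 1 ≤ K) (r : ℝ) (hr0 : 0 < r) (hr1 : r < 1)
    (ρ : ℤ → ℂ)
    (hρ : ∀ k : ℤ, ρ k = (r : ℂ) * Complex.exp (2 * (Real.pi : ℂ) * Complex.I * (k : ℂ) / (K : ℂ)))
    (Δ : ℤ → ℤ → ℂ)
    (hΔ : ∀ k1 k2 : ℤ, Δ k1 k2 =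
      (1 / (K : ℂ) ^ 2) * ∑ m ∈ Finset.range K, ∑ n ∈ Finset.range K,
        (r : ℂ) ^ (((m : ℤ) - (n : ℤ)).natAbs) *
          Complex.exp (-2 * (Real.pi : ℂ) * Complex.I *
            (((k1 * m - k2 * n : ℤ)) : ℂ) / (K : ℂ)))
    (k : ℤ) :
    Δ k k = (1 / (K : ℂ) ^ 2) *
      ((K : ℂ) * (1 - (r : ℂ) ^ 2) / ((1 - (starRingEnd ℂ) (ρ k)) * (1 - ρ k))
        - (starRingEnd ℂ) (ρ k) * (1 - (r : ℂ) ^ K) / (1 - (starRingEnd ℂ) (ρ k)) ^ 2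
        - ρ k * (1 - (r : ℂ) ^ K) / (1 - ρ k) ^ 2) :=
  stmt_11_general K hK r ρ hρ Δ hΔ k <| hρ k ▸
    ofReal_mul_exp_two_pi_mul_I_mul_int_div_ne_one ((abs_of_pos hr0).trans_lt hr1).ne k K
end

section
/- Let K ≥ 1 be an integer, 0 < r < 1, and let k be an integer. Then the double sum Δ(k) equals F(cos(2πk/K)), where F(x) = (1 − r²) / (K·(1 + r² − 2rx)) + 2r·(1 − r^K)·(2r − (1 + r²)·x) / (K²·(1 + r² − 2rx)²); in particular Δ(k) is a real number. -/
open Complex Finset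

/-!
On the diagonal `k1 = k2` the phase is `z ^ m * w ^ n` with `z = e^{-2πik/K}` and `w = z⁻¹`, so the
summand depends only on `m - n`: it is `(r * z) ^ (m - n)` for `n < m` and `(r * w) ^ (n - m)` for
`m < n`. Each triangle is an iterated geometric sum, and `z ^ K = w ^ K = 1` makes both closed forms
end in the same factor `1 - r ^ K`. Their sum is symmetric in `z` and `w`, hence a function of
`z * w = 1` and `z + w = 2 cos (2πk/K)`; in particular `(1 - r * z) * (1 - r * w)` is the
denominator `1 + r² - 2 r cos (2πk/K)`.
-/

lemma sum_range_sum_range_eq_diag_add_triangles {M : Type*} [AddCommMonoid M] (f : ℕ → ℕ → M)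
    (N : ℕ) :
    ∑ m ∈ range N, ∑ n ∈ range N, f m n =
      ∑ m ∈ range N, f m m + ∑ m ∈ range N, ∑ n ∈ range m, f m n +
        ∑ m ∈ range N, ∑ n ∈ range m, f n m := by
  induction N with
  | zero => simp
  | succ N ih =>
    simp only [sum_range_succ, sum_add_distrib, ih]
    abel

lemma one_sub_mul_sum_range_pow_sub {R : Type*} [Ring R] (a : R) (m : ℕ) :
    (1 - a) * ∑ n ∈ range m, a ^ (m - n) = a * (1 - a ^ m) := by
  have reflected : ∑ n ∈ range m, a ^ (m - n) = (∑ j ∈ range m, a ^ j) * a := by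
    rw [← sum_range_reflect (a ^ ·) m, sum_mul]
    refine sum_congr rfl fun n hn => ?_
    rw [← pow_succ]
    congr 1
    have := mem_range.mp hn
    omega
  rw [reflected, ← mul_assoc, mul_neg_geom_sum]
  exact ((Commute.one_left a).sub_left (Commute.pow_self a m)).eq

lemma one_sub_sq_mul_sum_range_sum_range_pow_sub {R : Type*} [Ring R] (a : R) (N : ℕ) :
    (1 - a) ^ 2 * ∑ m ∈ range N, ∑ n ∈ range m, a ^ (m - n) =
      a * ((1 - a) * N - (1 - a ^ N)) := by
  have comm : (1 - a) * a = a * (1 - a) := by noncomm_ring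
  calc (1 - a) ^ 2 * ∑ m ∈ range N, ∑ n ∈ range m, a ^ (m - n)
      = (1 - a) * ∑ m ∈ range N, a * (1 - a ^ m) := by
        rw [sq, mul_assoc, mul_sum]
        simp only [one_sub_mul_sum_range_pow_sub]
    _ = a * ((1 - a) * N - (1 - a) * ∑ m ∈ range N, a ^ m) := by
        rw [← mul_sum, ← mul_assoc, comm, mul_assoc, sum_sub_distrib, mul_sub]
        simp
    _ = a * ((1 - a) * N - (1 - a ^ N)) := by rw [mul_neg_geom_sum]

lemma pow_natAbs_sub_mul_pow_mul_pow_of_le {R : Type*} [CommSemiring R] (s : R) {z w : R}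
    (hzw : z * w = 1) {m n : ℕ} (hnm : n ≤ m) :
    s ^ ((m : ℤ) - (n : ℤ)).natAbs * (z ^ m * w ^ n) = (s * z) ^ (m - n) := by
  obtain ⟨d, rfl⟩ := Nat.exists_eq_add_of_le hnm
  rw [show (((n + d : ℕ) : ℤ) - n).natAbs = d by omega, Nat.add_sub_cancel_left]
  calc s ^ d * (z ^ (n + d) * w ^ n) = (s * z) ^ d * (z * w) ^ n := by ring
    _ = (s * z) ^ d := by rw [hzw, one_pow, mul_one]

lemma sum_sum_pow_natAbs_sub_mul_pow_mul_pow {R : Type*} [CommSemiring R] (s : R) {z w : R}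
    (hzw : z * w = 1) (N : ℕ) :
    ∑ m ∈ range N, ∑ n ∈ range N, s ^ ((m : ℤ) - (n : ℤ)).natAbs * (z ^ m * w ^ n) =
      N + ∑ m ∈ range N, ∑ n ∈ range m, (s * z) ^ (m - n) +
        ∑ m ∈ range N, ∑ n ∈ range m, (s * w) ^ (m - n) := by
  have hwz : w * z = 1 := by rw [mul_comm, hzw]
  rw [sum_range_sum_range_eq_diag_add_triangles]
  congr 1
  · congr 1
    · simp [← mul_pow, hzw]
    · refine sum_congr rfl fun m _ => sum_congr rfl fun n hn => ?_
      exact pow_natAbs_sub_mul_pow_mul_pow_of_le s hzw (mem_range.mp hn).le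
  · refine sum_congr rfl fun m _ => sum_congr rfl fun n hn => ?_
    rw [← Int.natAbs_neg, neg_sub, mul_comm (z ^ n)]
    exact pow_natAbs_sub_mul_pow_mul_pow_of_le s hwz (mem_range.mp hn).le

lemma sum_sum_pow_natAbs_sub_mul_sq_of_pow_eq_one {R : Type*} [CommRing R] (s : R) {z w : R}
    (hzw : z * w = 1) {N : ℕ} (hz : z ^ N = 1) :
    (∑ m ∈ range N, ∑ n ∈ range N, s ^ ((m : ℤ) - (n : ℤ)).natAbs * (z ^ m * w ^ n)) *
        (1 + s ^ 2 - s * (z + w)) ^ 2 =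
      N * (1 - s ^ 2) * (1 + s ^ 2 - s * (z + w)) +
        s * (1 - s ^ N) * (4 * s - (1 + s ^ 2) * (z + w)) := by
  have hw : w ^ N = 1 := by rw [← one_mul (w ^ N), ← hz, ← mul_pow, hzw, one_pow, hz]
  have factor : 1 + s ^ 2 - s * (z + w) = (1 - s * z) * (1 - s * w) := by
    linear_combination -s ^ 2 * hzw
  have lower := one_sub_sq_mul_sum_range_sum_range_pow_sub (s * z) N
  have upper := one_sub_sq_mul_sum_range_sum_range_pow_sub (s * w) N
  rw [mul_pow s z N, hz, mul_one] at lower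
  rw [mul_pow s w N, hw, mul_one] at upper
  have linear_part : (1 - s * z) * (1 - s * w) + s * z * (1 - s * w) + s * w * (1 - s * z) =
      1 - s ^ 2 := by
    linear_combination -s ^ 2 * hzw
  have constant_part : z * (1 - s * w) ^ 2 + w * (1 - s * z) ^ 2 =
      (1 + s ^ 2) * (z + w) - 4 * s := by
    linear_combination (s ^ 2 * (z + w) - 4 * s) * hzw
  rw [sum_sum_pow_natAbs_sub_mul_pow_mul_pow s hzw, factor]
  linear_combination (1 - s * w) ^ 2 * lower + (1 - s * z) ^ 2 * upper +
    N * (1 - s * z) * (1 - s * w) * linear_part - s * (1 - s ^ N) * constant_part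

lemma exp_neg_mul_I_mul_sub (θ : ℂ) (m n : ℕ) :
    exp (-θ * I * (m - n)) = exp (-θ * I) ^ m * exp (θ * I) ^ n := by
  rw [← exp_nat_mul, ← exp_nat_mul, ← exp_add]
  congr 1
  ring

lemma exp_neg_two_pi_mul_div_mul_I_pow_eq_one {K : ℕ} (hK : K ≠ 0) (k : ℤ) :
    exp (-(2 * Real.pi * k / K) * I) ^ K = 1 := by
  have hK' : (K : ℂ) ≠ 0 := Nat.cast_ne_zero.mpr hK
  rw [← exp_nat_mul, exp_eq_one_iff]
  refine ⟨-k, ?_⟩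
  push_cast
  field_simp

lemma one_add_sq_sub_two_mul_pos {r x : ℝ} (hr : |r| ≠ 1) (hx : |x| ≤ 1) :
    0 < 1 + r ^ 2 - 2 * r * x := by
  have hrx : r * x ≤ |r| :=
    calc r * x ≤ |r| * |x| := (le_abs_self _).trans_eq (abs_mul r x)
      _ ≤ |r| := mul_le_of_le_one_right (abs_nonneg r) hx
  have hsq : 0 < (|r| - 1) ^ 2 := sq_pos_of_ne_zero (sub_ne_zero.mpr hr)
  linarith [sq_abs r]

theorem stmt_13_general {K : ℕ} (hK : K ≠ 0) (r : ℂ) (k : ℤ) {x : ℂ}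
    (hx : x = Complex.cos (2 * Real.pi * k / K)) (hD : 1 + r ^ 2 - 2 * r * x ≠ 0) :
    (1 / (K : ℂ) ^ 2) * ∑ m ∈ range K, ∑ n ∈ range K,
        r ^ ((m : ℤ) - (n : ℤ)).natAbs *
          exp (-2 * Real.pi * I * ((k * m - k * n : ℤ) : ℂ) / K) =
      (1 - r ^ 2) / (K * (1 + r ^ 2 - 2 * r * x)) +
        2 * r * (1 - r ^ K) * (2 * r - (1 + r ^ 2) * x) /
          ((K : ℂ) ^ 2 * (1 + r ^ 2 - 2 * r * x) ^ 2) := by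
  have hK' : (K : ℂ) ≠ 0 := Nat.cast_ne_zero.mpr hK
  set θ : ℂ := 2 * Real.pi * k / K with hθ
  have phase (m n : ℕ) : exp (-2 * Real.pi * I * ((k * m - k * n : ℤ) : ℂ) / K) =
      exp (-θ * I) ^ m * exp (θ * I) ^ n := by
    rw [← exp_neg_mul_I_mul_sub, hθ]
    push_cast
    ring_nf
  have inverse : exp (-θ * I) * exp (θ * I) = 1 := by
    rw [neg_mul, ← exp_add, neg_add_cancel, exp_zero]
  have two_mul_x : exp (-θ * I) + exp (θ * I) = 2 * x := by rw [hx, two_cos, add_comm]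
  have closed := sum_sum_pow_natAbs_sub_mul_sq_of_pow_eq_one r inverse
    (exp_neg_two_pi_mul_div_mul_I_pow_eq_one hK k)
  rw [two_mul_x, ← mul_assoc, mul_comm r 2, ← eq_div_iff (pow_ne_zero 2 hD)] at closed
  simp_rw [phase]
  rw [closed]
  field_simp
  ring

/-- The diagonal correlation `Δ(k)` of the nDFT coefficients of the Wiener phase-noise
process equals `F(cos(2πk/K))`; in particular it is a real number. -/
theorem stmt_13 (K : ℕ) (hK : 1 ≤ K) (r : ℝ) (hr0 : 0 < r) (hr1 : r < 1)
    (Δ : ℤ → ℤ → ℂ)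
    (hΔ : ∀ k1 k2 : ℤ, Δ k1 k2 =
      (1 / (K : ℂ) ^ 2) * ∑ m ∈ Finset.range K, ∑ n ∈ Finset.range K,
        (r : ℂ) ^ (((m : ℤ) - (n : ℤ)).natAbs) *
          Complex.exp (-2 * (Real.pi : ℂ) * Complex.I *
            (((k1 * m - k2 * n : ℤ)) : ℂ) / (K : ℂ)))
    (F : ℝ → ℝ)
    (hF : ∀ x : ℝ, F x =
      (1 - r ^ 2) / ((K : ℝ) * (1 + r ^ 2 - 2 * r * x)) +
        2 * r * (1 - r ^ K) * (2 * r - (1 + r ^ 2) * x) /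
          ((K : ℝ) ^ 2 * (1 + r ^ 2 - 2 * r * x) ^ 2))
    (k : ℤ) :
    Δ k k = ((F (Real.cos (2 * Real.pi * (k : ℝ) / (K : ℝ))) : ℝ) : ℂ) := by
  have hD := one_add_sq_sub_two_mul_pos (abs_lt.mpr ⟨by linarith, hr1⟩).ne
    (Real.abs_cos_le_one (2 * Real.pi * k / K))
  rw [hΔ, hF, stmt_13_general (by omega) r k rfl (by exact_mod_cast hD.ne')]
  push_cast
  rfl
end
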